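/- arXiv:2006.07451 — 3 statements merged into one kernel-verified Lean document; each statement's English description precedes it below -/
import Mathlib

section
/- Let F, W be n×n real symmetric positive-definite matrices and R a p×p real symmetric positive-definite matrix, and suppose the Loewner-order bounds λ_min(R⁻¹)·W ⪯ F ⪯ λ_max(R⁻¹)·W hold. Then max{1, κ(W)/κ(R)} ≤ κ(F) ≤ κ(R)·κ(W), where κ(A) = λ_max(A)/λ_min(A) denotes the condition number of a symmetric positive-definite matrix A. -/
open Matrix

/-- The largest eigenvalue of a real symmetric (Hermitian) matrix. -/
noncomputable def eigMax {n : ℕ} {A : Matrix (Fin n) (Fin n) ℝ} (hA : A.IsHermitian) : ℝ :=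
  ⨆ i, hA.eigenvalues i

/-- The smallest eigenvalue of a real symmetric (Hermitian) matrix. -/
noncomputable def eigMin {n : ℕ} {A : Matrix (Fin n) (Fin n) ℝ} (hA : A.IsHermitian) : ℝ :=
  ⨅ i, hA.eigenvalues i

/-- The condition number `κ(A) = λ_max(A)/λ_min(A)` of a symmetric positive-definite matrix. -/
noncomputable def condNum {n : ℕ} {A : Matrix (Fin n) (Fin n) ℝ} (hA : A.PosDef) : ℝ :=
  eigMax hA.1 / eigMin hA.1

/-!
`λ_max(A)` is the least `c` with `A ⪯ c • 1` and `λ_min(A)` the greatest `c` with `c • 1 ⪯ A`. Hence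
`a • B ⪯ A ⪯ b • B` gives `λ_max(A) ≤ b λ_max(B)` and `a λ_min(B) ≤ λ_min(A)`, so
`κ(A) ≤ (b / a) κ(B)`. The hypothesis is symmetric in `A` and `B`, since it also reads
`b⁻¹ • A ⪯ B ⪯ a⁻¹ • A`; this gives `κ(B) ≤ (b / a) κ(A)`. For `a`, `b` the extreme eigenvalues of
`R⁻¹`, the factor `b / a` is `κ(R⁻¹) = κ(R)`.
-/

open scoped MatrixOrder

theorem spectrum_nonsing_inv {ι K : Type*} [Fintype ι] [DecidableEq ι] [Field K]
    {A : Matrix ι ι K} (hA : IsUnit A) : spectrum K A⁻¹ = (spectrum K A)⁻¹ := by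
  obtain ⟨u, rfl⟩ := hA
  rw [spectrum.map_inv, Matrix.coe_units_inv]

section

variable {n : ℕ} [NeZero n] {A B : Matrix (Fin n) (Fin n) ℝ}

theorem isGreatest_eigMax (hA : A.IsHermitian) : IsGreatest (spectrum ℝ A) (eigMax hA) := by
  rw [hA.spectrum_real_eq_range_eigenvalues]
  exact ⟨exists_eq_ciSup_of_finite,
    Set.forall_mem_range.2 (le_ciSup (Set.finite_range _).bddAbove)⟩

theorem isLeast_eigMin (hA : A.IsHermitian) : IsLeast (spectrum ℝ A) (eigMin hA) := by
  rw [hA.spectrum_real_eq_range_eigenvalues]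
  exact ⟨exists_eq_ciInf_of_finite,
    Set.forall_mem_range.2 (ciInf_le (Set.finite_range _).bddBelow)⟩

theorem eigMin_le_eigMax (hA : A.IsHermitian) : eigMin hA ≤ eigMax hA :=
  (isLeast_eigMin hA).2 (isGreatest_eigMax hA).1

theorem eigMax_le_iff (hA : A.IsHermitian) {c : ℝ} : eigMax hA ≤ c ↔ A ≤ c • 1 := by
  rw [isLUB_le_iff (isGreatest_eigMax hA).isLUB, ← Algebra.algebraMap_eq_smul_one,
    le_algebraMap_iff_spectrum_le hA.isSelfAdjoint, mem_upperBounds]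

theorem le_eigMin_iff (hA : A.IsHermitian) {c : ℝ} : c ≤ eigMin hA ↔ c • 1 ≤ A := by
  rw [le_isGLB_iff (isLeast_eigMin hA).isGLB, ← Algebra.algebraMap_eq_smul_one,
    algebraMap_le_iff_le_spectrum hA.isSelfAdjoint, mem_lowerBounds]

theorem eigMax_le_mul_eigMax (hA : A.IsHermitian) (hB : B.IsHermitian) {c : ℝ} (hc : 0 ≤ c)
    (hAB : A ≤ c • B) : eigMax hA ≤ c * eigMax hB := by
  rw [eigMax_le_iff]
  calc A ≤ c • B := hAB
    _ ≤ c • eigMax hB • 1 := smul_le_smul_of_nonneg_left ((eigMax_le_iff hB).1 le_rfl) hc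
    _ = (c * eigMax hB) • 1 := smul_smul _ _ _

theorem mul_eigMin_le_eigMin (hA : A.IsHermitian) (hB : B.IsHermitian) {c : ℝ} (hc : 0 ≤ c)
    (hBA : c • B ≤ A) : c * eigMin hB ≤ eigMin hA := by
  rw [le_eigMin_iff]
  calc (c * eigMin hB) • 1 = c • eigMin hB • 1 := mul_smul _ _ _
    _ ≤ c • B := smul_le_smul_of_nonneg_left ((le_eigMin_iff hB).1 le_rfl) hc
    _ ≤ A := hBA

theorem eigMin_pos (hA : A.PosDef) : 0 < eigMin hA.1 := by
  obtain ⟨i, hi⟩ := exists_eq_ciInf_of_finite (f := hA.1.eigenvalues)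
  exact (hA.eigenvalues_pos i).trans_eq hi

theorem eigMax_pos (hA : A.PosDef) : 0 < eigMax hA.1 :=
  (eigMin_pos hA).trans_le (eigMin_le_eigMax hA.1)

theorem eigMax_inv (hA : A.PosDef) : eigMax hA.inv.1 = (eigMin hA.1)⁻¹ := by
  refine (isGreatest_eigMax hA.inv.1).unique ?_
  rw [spectrum_nonsing_inv hA.isUnit]
  exact ⟨Set.inv_mem_inv.2 (isLeast_eigMin hA.1).1, fun x hx =>
    le_inv_of_le_inv₀ (eigMin_pos hA) ((isLeast_eigMin hA.1).2 hx)⟩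

theorem eigMin_inv (hA : A.PosDef) : eigMin hA.inv.1 = (eigMax hA.1)⁻¹ := by
  refine (isLeast_eigMin hA.inv.1).unique ?_
  rw [spectrum_nonsing_inv hA.isUnit]
  refine ⟨Set.inv_mem_inv.2 (isGreatest_eigMax hA.1).1, fun x hx => ?_⟩
  have hx_pos : 0 < x := inv_pos.1 ((eigMin_pos hA).trans_le ((isLeast_eigMin hA.1).2 hx))
  exact inv_le_of_inv_le₀ hx_pos ((isGreatest_eigMax hA.1).2 hx)

theorem one_le_condNum (hA : A.PosDef) : 1 ≤ condNum hA :=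
  (one_le_div (eigMin_pos hA)).2 (eigMin_le_eigMax hA.1)

theorem condNum_inv (hA : A.PosDef) : condNum hA.inv = condNum hA := by
  rw [condNum, eigMax_inv hA, eigMin_inv hA, inv_div_inv, condNum]

theorem condNum_left_le_of_smul_le_of_le_smul (hA : A.PosDef) (hB : B.PosDef) {a b : ℝ}
    (ha : 0 < a) (hb : 0 ≤ b) (hlow : a • B ≤ A) (hhigh : A ≤ b • B) :
    condNum hA ≤ b / a * condNum hB :=
  calc eigMax hA.1 / eigMin hA.1
      ≤ (b * eigMax hB.1) / (a * eigMin hB.1) :=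
        div_le_div₀ (mul_nonneg hb (eigMax_pos hB).le)
          (eigMax_le_mul_eigMax hA.1 hB.1 hb hhigh) (mul_pos ha (eigMin_pos hB))
          (mul_eigMin_le_eigMin hA.1 hB.1 ha.le hlow)
    _ = b / a * (eigMax hB.1 / eigMin hB.1) := mul_div_mul_comm _ _ _ _

theorem condNum_right_le_of_smul_le_of_le_smul (hA : A.PosDef) (hB : B.PosDef) {a b : ℝ}
    (ha : 0 < a) (hb : 0 < b) (hlow : a • B ≤ A) (hhigh : A ≤ b • B) :
    condNum hB ≤ b / a * condNum hA := by
  rw [← inv_div_inv]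
  exact condNum_left_le_of_smul_le_of_le_smul hB hA (inv_pos.2 hb) (inv_pos.2 ha).le
    ((inv_smul_le_iff_of_pos hb).2 hhigh) ((le_inv_smul_iff_of_pos ha).2 hlow)

end

/-- (Corollary `fishercond`.)  If `F, W` are symmetric positive definite and
`λ_min(R⁻¹)·W ⪯ F ⪯ λ_max(R⁻¹)·W` in the Loewner order for a symmetric positive-definite `R`,
then `max{1, κ(W)/κ(R)} ≤ κ(F) ≤ κ(R)·κ(W)`. -/
theorem condNum_bounds_of_loewner_sandwich
    {n p : ℕ} (hn : 0 < n) (hp : 0 < p)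
    (F W : Matrix (Fin n) (Fin n) ℝ) (R : Matrix (Fin p) (Fin p) ℝ)
    (hF : F.PosDef) (hW : W.PosDef) (hR : R.PosDef)
    (hlow : (F - eigMin hR.inv.1 • W).PosSemidef)
    (hhigh : (eigMax hR.inv.1 • W - F).PosSemidef) :
    max 1 (condNum hW / condNum hR) ≤ condNum hF ∧ condNum hF ≤ condNum hR * condNum hW := by
  have : NeZero n := ⟨hn.ne'⟩
  have : NeZero p := ⟨hp.ne'⟩
  have ha : 0 < eigMin hR.inv.1 := eigMin_pos hR.inv
  have hb : 0 < eigMax hR.inv.1 := eigMax_pos hR.inv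
  have hκR : 0 < condNum hR := zero_lt_one.trans_le (one_le_condNum hR)
  have hκ : eigMax hR.inv.1 / eigMin hR.inv.1 = condNum hR := condNum_inv hR
  have hWF : condNum hW ≤ condNum hR * condNum hF :=
    hκ ▸ condNum_right_le_of_smul_le_of_le_smul hF hW ha hb hlow hhigh
  have hFW : condNum hF ≤ condNum hR * condNum hW :=
    hκ ▸ condNum_left_le_of_smul_le_of_le_smul hF hW ha hb.le hlow hhigh
  exact ⟨max_le (one_le_condNum hF) ((div_le_iff₀' hκR).2 hWF), hFW⟩
end

section
/- Let n, p ≥ 1, let φ : ℝ × ℝⁿ → ℝⁿ and h : ℝⁿ → ℝᵖ be such that (t, x) ↦ h(φ(t, x)) =: y(t, x) is infinitely differentiable, fix x₀ ∈ ℝⁿ and t₁ > 0, and for ε > 0 let W_ε be the empirical observability Gramian at x₀ over [0, t₁]: (W_ε)_{ij} = (1/(4ε²)) ∫₀^{t₁} (y(t, x₀+εeᵢ) − y(t, x₀−εeᵢ)) · (y(t, x₀+εeⱼ) − y(t, x₀−εeⱼ)) dt. Suppose there exists an n×n matrix W₀ of rank n such that W_ε → W₀ as ε → 0⁺. Then the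 system is weakly observable at x₀: there exists an open neighborhood U of x₀ such that for every x₁ ∈ U, if y(t, x₁) = y(t, x₀) for all t ≥ 0 then x₁ = x₀. -/
open Matrix

open Filter Function MeasureTheory Module Set Topology
open scoped Interval NNReal

/-!
The central difference quotients `(y(t, x + εv) - y(t, x - εv)) / 2ε` converge to the directional
derivatives `D(t) v`, where `D(t)` is the derivative of `y(t, ·)` at `x`, and are dominated by a
Lipschitz constant of `y`. Hence the empirical Gramian always converges to the Gramian
`∫ D(t)ᵀ D(t) dt` of the linearized output.

If points `z ≠ x` indistinguishable from `x` accumulated at `x`, then by compactness of the unit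
sphere they would have a limiting direction `v ≠ 0`. Every `y(t, ·)` is constant on these points,
so `D(t) v = 0` for all `t`, and `v` would lie in the kernel of the Gramian.
-/

theorem mulVec_injective_of_rank_eq_card {m n K : Type*} [Finite m] [Fintype n] [Field K]
    {A : Matrix m n K} (hA : A.rank = Fintype.card n) : Injective A.mulVec := by
  have := Fintype.ofFinite m
  rw [mulVec_injective_iff, linearIndependent_iff_card_eq_finrank_span, Set.finrank,
    ← rank_eq_finrank_span_cols, hA]

variable {E F G : Type*} [NormedAddCommGroup E] [NormedSpace ℝ E] [NormedAddCommGroup F]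
  [NormedSpace ℝ F] [NormedAddCommGroup G] [NormedSpace ℝ G]

theorem eventually_eq_of_forall_eq_of_hasFDerivAt {ι : Type*} [ProperSpace E] {f : ι → E → F}
    {f' : ι → E →L[ℝ] F} {x : E} (hf : ∀ i, HasFDerivAt (f i) (f' i) x)
    (hf' : ∀ v, (∀ i, f' i v = 0) → v = 0) :
    ∀ᶠ z in 𝓝 x, (∀ i, f i z = f i x) → z = x := by
  by_contra hfreq
  set S : Set E := {z | ∀ i, f i z = f i x}
  have hacc : AccPt x (𝓟 S) := accPt_iff_frequently.2 <| (not_eventually.1 hfreq).mono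
    fun z hz => (Classical.not_imp.1 hz).symm
  obtain ⟨v, hv, hv0⟩ := tangentConeAt_nonempty_of_properSpace (𝕜 := ℝ) hacc
  refine hv0 (hf' v fun i => ?_)
  have hconst : HasFDerivWithinAt (f i) (0 : E →L[ℝ] F) S x :=
    (hasFDerivWithinAt_const (f i x) x S).congr (fun z hz => hz i) rfl
  exact (hf i).hasFDerivWithinAt.unique_on hconst hv

/-- The central difference quotient of `f` at `x` in the direction `v` with step `ε`; it is `0` for
`ε = 0`. -/
noncomputable def centralSlope (f : E → F) (x v : E) (ε : ℝ) : F :=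
  (2 * ε)⁻¹ • (f (x + ε • v) - f (x - ε • v))

theorem tendsto_centralSlope {f : E → F} {f' : E →L[ℝ] F} {x : E} (hf : HasFDerivAt f f' x)
    (v : E) : Tendsto (centralSlope f x v) (𝓝[≠] 0) (𝓝 (f' v)) := by
  have hfwd : Tendsto (fun ε : ℝ => ε⁻¹ • (f (x + ε • v) - f x)) (𝓝[≠] 0) (𝓝 (f' v)) :=
    (hf.hasLineDerivAt v).tendsto_slope_zero
  have hbwd : Tendsto (fun ε : ℝ => ε⁻¹ • (f (x - ε • v) - f x)) (𝓝[≠] 0) (𝓝 (-f' v)) := by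
    simpa [sub_eq_add_neg] using (hf.hasLineDerivAt (-v)).tendsto_slope_zero
  have hlim : (2⁻¹ : ℝ) • (f' v - -f' v) = f' v := by module
  refine hlim ▸ ((hfwd.sub hbwd).const_smul (2⁻¹ : ℝ)).congr fun ε => ?_
  rw [centralSlope, ← smul_sub, sub_sub_sub_cancel_right, smul_smul, mul_inv]

theorem norm_centralSlope_le {f : E → F} {s : Set E} {K : ℝ≥0} (hf : LipschitzOnWith K f s)
    {x v : E} {ε : ℝ} (hadd : x + ε • v ∈ s) (hsub : x - ε • v ∈ s) :
    ‖centralSlope f x v ε‖ ≤ K * ‖v‖ := by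
  have hstep : x + ε • v - (x - ε • v) = (2 * ε) • v := by module
  calc ‖centralSlope f x v ε‖
      = |2 * ε|⁻¹ * ‖f (x + ε • v) - f (x - ε • v)‖ := by
        rw [centralSlope, norm_smul, norm_inv, Real.norm_eq_abs]
    _ ≤ |2 * ε|⁻¹ * (K * (|2 * ε| * ‖v‖)) := by
        gcongr
        simpa only [hstep, norm_smul, Real.norm_eq_abs] using hf.norm_sub_le hadd hsub
    _ = |2 * ε|⁻¹ * |2 * ε| * (K * ‖v‖) := by ring
    _ ≤ K * ‖v‖ := mul_le_of_le_one_left (by positivity) inv_mul_le_one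

theorem eventually_norm_centralSlope_le {x : E} {s : Set E} (hs : s ∈ 𝓝 x) (v : E) :
    ∀ᶠ ε : ℝ in 𝓝[≠] 0, ∀ (f : E → F) (K : ℝ≥0), LipschitzOnWith K f s →
      ‖centralSlope f x v ε‖ ≤ K * ‖v‖ := by
  have hadd : Tendsto (fun ε : ℝ => x + ε • v) (𝓝 0) (𝓝 x) :=
    Continuous.tendsto' (by fun_prop) _ _ (by simp)
  have hsub : Tendsto (fun ε : ℝ => x - ε • v) (𝓝 0) (𝓝 x) :=
    Continuous.tendsto' (by fun_prop) _ _ (by simp)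
  filter_upwards [(hadd.eventually hs).filter_mono nhdsWithin_le_nhds,
    (hsub.eventually hs).filter_mono nhdsWithin_le_nhds] with ε hε hε' f K hf
  exact norm_centralSlope_le hf hε hε'

theorem tendsto_integral_centralSlope {T : Type*} [MeasurableSpace T] {μ : Measure T}
    (B : F →L[ℝ] F →L[ℝ] G) {y : T → E → F} {y' : T → E →L[ℝ] F} {K : T → ℝ≥0} {x : E}
    {s : Set E} (hs : s ∈ 𝓝 x) (hmeas : ∀ z, AEStronglyMeasurable (y · z) μ)
    (hlip : ∀ᵐ t ∂μ, LipschitzOnWith (K t) (y t) s)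
    (hK : Integrable (fun t => (K t : ℝ) ^ 2) μ)
    (hderiv : ∀ᵐ t ∂μ, HasFDerivAt (y t) (y' t) x) (v w : E) :
    Tendsto (fun ε => ∫ t, B (centralSlope (y t) x v ε) (centralSlope (y t) x w ε) ∂μ) (𝓝[≠] 0)
      (𝓝 (∫ t, B (y' t v) (y' t w) ∂μ)) := by
  have hslope (u : E) (ε : ℝ) : AEStronglyMeasurable (fun t => centralSlope (y t) x u ε) μ :=
    ((hmeas _).sub (hmeas _)).const_smul _
  refine tendsto_integral_filter_of_dominated_convergence
    (fun t => ‖B‖ * ‖v‖ * ‖w‖ * (K t : ℝ) ^ 2) (.of_forall fun ε => ?_) ?_ (hK.const_mul _) ?_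
  · exact B.continuous₂.comp_aestronglyMeasurable ((hslope v ε).prodMk (hslope w ε))
  · filter_upwards [eventually_norm_centralSlope_le (F := F) hs v,
      eventually_norm_centralSlope_le (F := F) hs w] with ε hv hw
    filter_upwards [hlip] with t ht
    calc ‖B (centralSlope (y t) x v ε) (centralSlope (y t) x w ε)‖
        ≤ ‖B‖ * ‖centralSlope (y t) x v ε‖ * ‖centralSlope (y t) x w ε‖ := B.le_opNorm₂ _ _
      _ ≤ ‖B‖ * (K t * ‖v‖) * (K t * ‖w‖) := by gcongr; exacts [hv _ _ ht, hw _ _ ht]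
      _ = ‖B‖ * ‖v‖ * ‖w‖ * (K t : ℝ) ^ 2 := by ring
  · filter_upwards [hderiv] with t ht
    exact (B.continuous₂.tendsto (y' t v, y' t w)).comp
      ((tendsto_centralSlope ht v).prodMk_nhds (tendsto_centralSlope ht w))

section Parametrized

variable {P : Type*} [NormedAddCommGroup P] [NormedSpace ℝ P] {y : P → E → F}

theorem exists_forall_lipschitzOnWith_of_contDiff_uncurry (hy : ContDiff ℝ 1 (uncurry y))
    {s : Set P} {k : Set E} (hs : Convex ℝ s) (hs' : IsCompact s) (hk : Convex ℝ k)
    (hk' : IsCompact k) : ∃ K, ∀ t ∈ s, LipschitzOnWith K (y t) k := by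
  obtain ⟨K, hK⟩ :=
    hy.contDiffOn.exists_lipschitzOnWith one_ne_zero (hs.prod hk) (hs'.prod hk')
  refine ⟨K, fun t ht => ?_⟩
  simpa [comp_def] using hK.comp (LipschitzWith.prodMk_left t).lipschitzOnWith fun z hz => ⟨ht, hz⟩

theorem hasFDerivAt_fderiv_of_contDiff_uncurry (hy : ContDiff ℝ 1 (uncurry y)) (x : E) (t : P) :
    HasFDerivAt (y t) (fderiv ℝ (y t) x) x :=
  ((hy.comp (contDiff_prodMk_right t)).differentiable one_ne_zero x).hasFDerivAt

theorem continuous_fderiv_apply_of_contDiff_uncurry (hy : ContDiff ℝ 1 (uncurry y)) (x v : E) :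
    Continuous fun t => fderiv ℝ (y t) x v :=
  (ContDiff.fderiv hy contDiff_const (zero_add 1).le).continuous.clm_apply continuous_const

end Parametrized

section Gramian

variable {ι : Type*} (B : F →L[ℝ] F →L[ℝ] ℝ) (e : Basis ι ℝ E) (y : ℝ → E → F) (x : E) (a b : ℝ)

/-- The empirical observability Gramian at `x` over the time interval from `a` to `b` of the output
`y`, for perturbations of size `ε` along the vectors of the basis `e`. Outputs are paired by an
arbitrary continuous bilinear form `B`, which is the dot product in the classical case. -/
noncomputable def empiricalGramian (ε : ℝ) : Matrix ι ι ℝ :=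
  .of fun i j => (1 / (4 * ε ^ 2)) * ∫ t in a..b,
    B (y t (x + ε • e i) - y t (x - ε • e i)) (y t (x + ε • e j) - y t (x - ε • e j))

/-- The observability Gramian over the time interval from `a` to `b` of the linearization at `x` of
the output `y`, in the basis `e` and for the output pairing `B`. -/
noncomputable def linearizedGramian : Matrix ι ι ℝ :=
  .of fun i j => ∫ t in a..b, B (fderiv ℝ (y t) x (e i)) (fderiv ℝ (y t) x (e j))

theorem empiricalGramian_apply_eq_integral_centralSlope (ε : ℝ) (i j : ι) :
    empiricalGramian B e y x a b ε i j =
      ∫ t in a..b, B (centralSlope (y t) x (e i) ε) (centralSlope (y t) x (e j) ε) := by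
  have hcoeff : 1 / (4 * ε ^ 2) = (2 * ε)⁻¹ * (2 * ε)⁻¹ := by
    rw [← mul_inv, one_div]
    ring_nf
  simp only [empiricalGramian, of_apply, centralSlope, map_smul, _root_.smul_apply,
    smul_eq_mul, intervalIntegral.integral_const_mul, hcoeff, mul_assoc]

variable {y}

theorem tendsto_empiricalGramian [Finite ι] (hy : ContDiff ℝ 1 (uncurry y)) :
    Tendsto (empiricalGramian B e y x a b) (𝓝[≠] 0) (𝓝 (linearizedGramian B e y x a b)) := by
  have := e.finiteDimensional_of_finite
  have := FiniteDimensional.proper_real E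
  obtain ⟨K, hK⟩ := exists_forall_lipschitzOnWith_of_contDiff_uncurry hy (convex_uIcc a b)
    isCompact_uIcc (convex_closedBall x 1) (isCompact_closedBall x 1)
  refine tendsto_pi_nhds.2 fun i => tendsto_pi_nhds.2 fun j => ?_
  simp only [empiricalGramian_apply_eq_integral_centralSlope, linearizedGramian, of_apply,
    intervalIntegral.intervalIntegral_eq_integral_uIoc]
  refine (tendsto_integral_centralSlope B (K := fun _ => K) (Metric.closedBall_mem_nhds x one_pos)
    (fun z => ?_) ?_ intervalIntegrable_const.def' (.of_forall ?_) (e i) (e j)).const_smul _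
  · exact (hy.continuous.comp (by fun_prop : Continuous fun t : ℝ => (t, z))).aestronglyMeasurable
  · exact ae_restrict_of_forall_mem measurableSet_uIoc fun t ht => hK t (uIoc_subset_uIcc ht)
  · exact hasFDerivAt_fderiv_of_contDiff_uncurry hy x

theorem linearizedGramian_mulVec_repr_apply [Fintype ι] (hy : ContDiff ℝ 1 (uncurry y)) (v : E)
    (i : ι) :
    (linearizedGramian B e y x a b *ᵥ e.repr v) i =
      ∫ t in a..b, B (fderiv ℝ (y t) x (e i)) (fderiv ℝ (y t) x v) := by
  have hint (j : ι) : IntervalIntegrable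
      (fun t => B (fderiv ℝ (y t) x (e i)) (fderiv ℝ (y t) x (e j)) * e.repr v j) volume a b := by
    have hcont := continuous_fderiv_apply_of_contDiff_uncurry hy x
    exact ((B.continuous₂.comp ((hcont (e i)).prodMk (hcont (e j)))).mul
      continuous_const).intervalIntegrable a b
  have hexpand (t : ℝ) : B (fderiv ℝ (y t) x (e i)) (fderiv ℝ (y t) x v) =
      ∑ j, B (fderiv ℝ (y t) x (e i)) (fderiv ℝ (y t) x (e j)) * e.repr v j := by
    conv_lhs => rw [← e.sum_repr v]
    simp only [map_sum, map_smul, smul_eq_mul, mul_comm]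
  simp only [hexpand, mulVec, dotProduct, linearizedGramian, of_apply,
    ← intervalIntegral.integral_mul_const]
  exact (intervalIntegral.integral_finsetSum fun j _ => hint j).symm

theorem eq_zero_of_forall_fderiv_apply_eq_zero [Fintype ι] (hy : ContDiff ℝ 1 (uncurry y))
    (hrank : (linearizedGramian B e y x a b).rank = Fintype.card ι) {v : E}
    (hv : ∀ t ∈ [[a, b]], fderiv ℝ (y t) x v = 0) : v = 0 := by
  have hker : linearizedGramian B e y x a b *ᵥ e.repr v = 0 := by
    ext i
    rw [linearizedGramian_mulVec_repr_apply B e x a b hy, Pi.zero_apply]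
    exact intervalIntegral.integral_zero_ae (.of_forall fun t ht => by
      rw [hv t (uIoc_subset_uIcc ht), map_zero])
  have hrepr : ⇑(e.repr v) = 0 := mulVec_injective_of_rank_eq_card hrank (by rw [hker, mulVec_zero])
  exact e.repr.map_eq_zero_iff.1 (DFunLike.coe_injective hrepr)

theorem weak_observability_of_limit_gramian_full_rank_general [Fintype ι]
    (hy : ContDiff ℝ 1 (uncurry y)) {W₀ : Matrix ι ι ℝ} (hrank : W₀.rank = Fintype.card ι)
    (hlim : Tendsto (empiricalGramian B e y x a b) (𝓝[>] 0) (𝓝 W₀)) :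
    ∀ᶠ z in 𝓝 x, (∀ t ∈ [[a, b]], y t z = y t x) → z = x := by
  have := e.finiteDimensional_of_finite
  have := FiniteDimensional.proper_real E
  obtain rfl : W₀ = linearizedGramian B e y x a b :=
    tendsto_nhds_unique hlim ((tendsto_empiricalGramian B e x a b hy).mono_left
      (nhdsGT_le_nhdsNE 0))
  simpa only [Subtype.forall] using eventually_eq_of_forall_eq_of_hasFDerivAt
    (fun t : [[a, b]] => hasFDerivAt_fderiv_of_contDiff_uncurry hy x t)
    fun v hv => eq_zero_of_forall_fderiv_apply_eq_zero B e x a b hy hrank fun t ht => hv ⟨t, ht⟩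

end Gramian

/-- (Theorem `weakobsv`.)  If the empirical observability Gramian of a smooth
output map `y(t,x) = h(φ(t,x))` at `x₀` over `[0,t₁]` converges, as `ε → 0⁺`, to a matrix `W₀`
of full rank `n`, then the system is weakly observable at `x₀`: some open neighborhood of `x₀`
contains no point other than `x₀` that is indistinguishable from `x₀`. -/
theorem weak_observability_of_limit_gramian_full_rank
    {n p : ℕ} (hn : 0 < n) (hp : 0 < p)
    (φ : ℝ → (Fin n → ℝ) → (Fin n → ℝ)) (h : (Fin n → ℝ) → (Fin p → ℝ))
    (y : ℝ → (Fin n → ℝ) → (Fin p → ℝ)) (hy : y = fun t x => h (φ t x))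
    (hsmooth : ContDiff ℝ (⊤ : ℕ∞) fun q : ℝ × (Fin n → ℝ) => y q.1 q.2)
    (x₀ : Fin n → ℝ) (t₁ : ℝ) (ht₁ : 0 < t₁)
    (W : ℝ → Matrix (Fin n) (Fin n) ℝ)
    (hW : W = fun ε => Matrix.of fun i j =>
      (1 / (4 * ε ^ 2)) *
        ∫ t in (0:ℝ)..t₁,
          (y t (x₀ + ε • (Pi.single i 1 : Fin n → ℝ)) -
              y t (x₀ - ε • (Pi.single i 1 : Fin n → ℝ))) ⬝ᵥ
            (y t (x₀ + ε • (Pi.single j 1 : Fin n → ℝ)) -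
              y t (x₀ - ε • (Pi.single j 1 : Fin n → ℝ))))
    (W₀ : Matrix (Fin n) (Fin n) ℝ) (hrank : W₀.rank = n)
    (hlim : Filter.Tendsto W (nhdsWithin 0 (Set.Ioi 0)) (nhds W₀)) :
    ∃ U : Set (Fin n → ℝ), IsOpen U ∧ x₀ ∈ U ∧
      ∀ x₁ ∈ U, (∀ t : ℝ, 0 ≤ t → y t x₁ = y t x₀) → x₁ = x₀ := by
  set B := (dotProductBilin ℝ ℝ : (Fin p → ℝ) →ₗ[ℝ] (Fin p → ℝ) →ₗ[ℝ] ℝ).toContinuousBilinearMap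
  have hW' : W = empiricalGramian B (Pi.basisFun ℝ (Fin n)) y x₀ 0 t₁ := by
    funext ε
    simp only [hW, empiricalGramian, B, Pi.basisFun_apply,
      LinearMap.toContinuousBilinearMap_apply, dotProductBilin_apply_apply]
  have hiso := weak_observability_of_limit_gramian_full_rank_general B (Pi.basisFun ℝ (Fin n)) x₀
    0 t₁ (hsmooth.of_le (by simp)) (by rw [hrank, Fintype.card_fin]) (hW' ▸ hlim)
  obtain ⟨U, hU, hUopen, hxU⟩ := eventually_nhds_iff.1 hiso
  refine ⟨U, hUopen, hxU, fun x₁ hx₁ hx₁y => hU x₁ hx₁ fun t ht => hx₁y t ?_⟩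
  rw [uIcc_of_le ht₁.le] at ht
  exact ht.1
end

section
/- Let n, p ≥ 1, let φ : ℝ × ℝⁿ → ℝⁿ and h : ℝⁿ → ℝᵖ be such that (t, x) ↦ h(φ(t, x)) =: y(t, x) is infinitely differentiable, fix x₀ ∈ ℝⁿ, t₁ > 0 and ε > 0, and let W_ε be the empirical observability Gramian at x₀ over [0, t₁] with entries (W_ε)_{ij} = (1/(4ε²)) ∫₀^{t₁} (y(t, x₀+εeᵢ) − y(t, x₀−εeᵢ)) · (y(t, x₀+εeⱼ) − y(t, x₀−εeⱼ)) dt. For each t, let Γ(t) = max_i sup_{η ∈ [x₀−εeᵢ, x₀+εeᵢ]} ‖D³_x y(t, η)(eᵢ, eᵢ, eᵢ)‖₁, where D³_x y(t, η) is the third Fréchet derivative of x ↦ y(t, x) at η and ‖·‖₁ the 1-norm on ℝᵖ, and let ‖D_x y(t, x₀)‖₂ be the operator 2-norm of the Jacobian of x ↦ y(t, x) at x₀. If the smallest singular value of W_ε satisfies σ_min(W_ε) > sup_{t ∈ [0, t₁]} ( (√n ε² t₁ / 3) ‖D_x y(t, x₀)‖₂ Γ(t) + (n ε⁴ t₁ /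 36) Γ(t)² ), then the system is weakly observable at x₀: there exists an open neighborhood U of x₀ such that for every x₁ ∈ U, if y(t, x₁) = y(t, x₀) for all t ≥ 0 then x₁ = x₀. -/
open Matrix
open scoped RealInnerProductSpace

/-!
By Taylor's formula, the central difference of `y t` at `x₀` along `ε eᵢ` is
`2 ε D_x y(t, x₀) eᵢ` up to an error of norm at most `ε³ Γ(t) / 3`. If a vector `v ≠ 0` were
annihilated by `D_x y(t, x₀)` for all `t ∈ [0, t₁]`, the first-order parts would cancel in
`∑ vᵢ (y(t, x₀ + ε eᵢ) - y(t, x₀ - ε eᵢ))`, so that `vᵀ W v` would consist of remainders only, at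
most `n ε⁴ t₁ / 36 · sup Γ² · ‖v‖²`; this is less than `σ_min(W) ‖v‖²`, a contradiction. Hence the
differentials `D_x y(t, x₀)` have trivial common kernel. In finite dimension finitely many times
already suffice for this, and the joint output at these times, having an injective differential at
`x₀`, takes its value at `x₀` at no other point nearby.
-/

open Set Filter Topology

section IteratedFDeriv

variable {𝕜 E F G : Type*} [NontriviallyNormedField 𝕜] [NormedAddCommGroup E] [NormedSpace 𝕜 E]
  [NormedAddCommGroup F] [NormedSpace 𝕜 F] [NormedAddCommGroup G] [NormedSpace 𝕜 G]

lemma iteratedFDeriv_comp_const_add_clm {f : E → F} {k : ℕ} (hf : ContDiff 𝕜 k f) (a : E)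
    (L : G →L[𝕜] E) (z : G) :
    iteratedFDeriv 𝕜 k (fun z => f (a + L z)) z =
      (iteratedFDeriv 𝕜 k f (a + L z)).compContinuousLinearMap fun _ => L := by
  have hcomp := L.iteratedFDeriv_comp_right (f := fun w => f (a + w))
    (hf.comp (contDiff_const.add contDiff_id)) z le_rfl
  rwa [iteratedFDeriv_comp_add_left] at hcomp

lemma continuous_iteratedFDeriv_slice {y : G → E → F} {k : ℕ}
    (hy : ContDiff 𝕜 k fun q : G × E => y q.1 q.2) :
    Continuous fun q : G × E => iteratedFDeriv 𝕜 k (y q.1) q.2 := by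
  have hslice : ∀ q : G × E, iteratedFDeriv 𝕜 k (y q.1) q.2 =
      (iteratedFDeriv 𝕜 k (fun q : G × E => y q.1 q.2) q).compContinuousLinearMap
        fun _ => ContinuousLinearMap.inr 𝕜 G E := fun q => by
    simpa using iteratedFDeriv_comp_const_add_clm hy (q.1, 0) (ContinuousLinearMap.inr 𝕜 G E) q.2
  simp only [hslice]
  exact (ContinuousMultilinearMap.compContinuousLinearMapL (F := F)
    fun _ : Fin k => ContinuousLinearMap.inr 𝕜 G E).continuous.comp
      (hy.continuous_iteratedFDeriv le_rfl)

end IteratedFDeriv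

section Taylor

open scoped Nat

variable {E F : Type*} [NormedAddCommGroup E] [NormedSpace ℝ E] [NormedAddCommGroup F]
  [NormedSpace ℝ F]

lemma iteratedDeriv_comp_const_add_smul {f : E → F} {k : ℕ} (hf : ContDiff ℝ k f) (x v : E)
    (s : ℝ) :
    iteratedDeriv k (fun s : ℝ => f (x + s • v)) s =
      iteratedFDeriv ℝ k f (x + s • v) fun _ => v := by
  simpa [iteratedDeriv_eq_iteratedFDeriv] using congrArg (fun T => T fun _ => 1)
    (iteratedFDeriv_comp_const_add_clm hf x (ContinuousLinearMap.toSpanSingleton ℝ v) s)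

lemma norm_sub_sum_iteratedDeriv_le [CompleteSpace F] {g : ℝ → F} {n : ℕ} {M : ℝ}
    (hg : ContDiff ℝ (n + 1 : ℕ) g) (hM : ∀ s ∈ Icc (0 : ℝ) 1, ‖iteratedDeriv (n + 1) g s‖ ≤ M) :
    ‖g 1 - ∑ k ∈ Finset.range (n + 1), (k ! : ℝ)⁻¹ • iteratedDeriv k g 0‖ ≤ M / (n + 1)! := by
  have hwithin : ∀ k ≤ n + 1, ∀ s ∈ Icc (0 : ℝ) 1,
      iteratedDerivWithin k g (uIcc 0 1) s = iteratedDeriv k g s := by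
    intro k hk s hs
    rw [uIcc_of_le zero_le_one]
    exact iteratedDerivWithin_eq_iteratedDeriv (uniqueDiffOn_Icc zero_lt_one)
      (hg.of_le (by exact_mod_cast hk)).contDiffAt hs
  have htaylor : taylorWithinEval g n (uIcc 0 1) 0 1 =
      ∑ k ∈ Finset.range (n + 1), (k ! : ℝ)⁻¹ • iteratedDeriv k g 0 := by
    rw [taylor_within_apply]
    refine Finset.sum_congr rfl fun k hk => ?_
    rw [hwithin k (Finset.mem_range.1 hk).le 0 (by simp), sub_zero, one_pow, mul_one]
  have hkernel : ∫ s in (0 : ℝ)..1, (1 - s) ^ n / n ! * M = M / (n + 1)! := by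
    rw [intervalIntegral.integral_mul_const, intervalIntegral.integral_div,
      intervalIntegral.integral_comp_sub_left (fun s : ℝ => s ^ n) 1, integral_pow]
    push_cast [Nat.factorial_succ]
    field_simp
    simp
  rw [← htaylor, taylor_integral_remainder hg.contDiffOn, ← hkernel]
  refine intervalIntegral.norm_integral_le_of_norm_le zero_le_one
    (MeasureTheory.ae_of_all _ fun s hs => ?_)
    ((by fun_prop : Continuous fun s : ℝ => (1 - s) ^ n / n ! * M).intervalIntegrable _ _)
  have hs' : s ∈ Icc (0 : ℝ) 1 := Ioc_subset_Icc_self hs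
  have hweight : 0 ≤ (1 - s) ^ n / (n ! : ℝ) := by
    have := sub_nonneg.2 hs.2
    positivity
  rw [hwithin _ le_rfl s hs', norm_smul, Real.norm_of_nonneg hweight]
  exact mul_le_mul_of_nonneg_left (hM s hs') hweight

lemma norm_sub_sum_iteratedFDeriv_le [CompleteSpace F] {f : E → F} {n : ℕ} {x v : E} {M : ℝ}
    (hf : ContDiff ℝ (n + 1 : ℕ) f)
    (hM : ∀ η ∈ segment ℝ x (x + v), ‖iteratedFDeriv ℝ (n + 1) f η fun _ => v‖ ≤ M) :
    ‖f (x + v) - ∑ k ∈ Finset.range (n + 1), (k ! : ℝ)⁻¹ • iteratedFDeriv ℝ k f x fun _ => v‖ ≤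
      M / (n + 1)! := by
  have hline : ContDiff ℝ (n + 1 : ℕ) fun s : ℝ => f (x + s • v) :=
    hf.comp (contDiff_const.add (contDiff_id.smul contDiff_const))
  have hderiv : ∀ k ≤ n + 1, ∀ s : ℝ, iteratedDeriv k (fun s : ℝ => f (x + s • v)) s =
      iteratedFDeriv ℝ k f (x + s • v) fun _ => v := fun k hk s =>
    iteratedDeriv_comp_const_add_smul (hf.of_le (by exact_mod_cast hk)) x v s
  have hbound : ∀ s ∈ Icc (0 : ℝ) 1,
      ‖iteratedDeriv (n + 1) (fun s : ℝ => f (x + s • v)) s‖ ≤ M := by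
    intro s hs
    rw [hderiv _ le_rfl]
    refine hM _ ?_
    rw [segment_eq_image']
    exact ⟨s, hs, by simp⟩
  have hsum : ∑ k ∈ Finset.range (n + 1), (k ! : ℝ)⁻¹ • iteratedFDeriv ℝ k f x (fun _ => v) =
      ∑ k ∈ Finset.range (n + 1),
        (k ! : ℝ)⁻¹ • iteratedDeriv k (fun s : ℝ => f (x + s • v)) 0 :=
    Finset.sum_congr rfl fun k hk => by simp [hderiv k (Finset.mem_range.1 hk).le]
  simpa [hsum] using norm_sub_sum_iteratedDeriv_le hline hbound

/-- The central difference of `f` at `x` along `v`, not divided by the step: the vector `v` carries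
the step size. -/
def centralDifference {E F : Type*} [AddGroup E] [AddGroup F] (f : E → F) (x v : E) : F :=
  f (x + v) - f (x - v)

lemma norm_centralDifference_sub_two_smul_fderiv_le [CompleteSpace F] {f : E → F} {x v : E}
    {M : ℝ} (hf : ContDiff ℝ 3 f)
    (hM : ∀ η ∈ segment ℝ (x - v) (x + v), ‖iteratedFDeriv ℝ 3 f η fun _ => v‖ ≤ M) :
    ‖centralDifference f x v - (2 : ℝ) • fderiv ℝ f x v‖ ≤ M / 3 := by
  have hsegment : ∀ {z}, z ∈ segment ℝ (x - v) (x + v) →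
      segment ℝ x z ⊆ segment ℝ (x - v) (x + v) := fun hz =>
    (convex_segment _ _).segment_subset (mem_segment_sub_add x v) hz
  have heven : (iteratedFDeriv ℝ 2 f x fun _ => -v) = iteratedFDeriv ℝ 2 f x fun _ => v := by
    simpa using (iteratedFDeriv ℝ 2 f x).map_smul_univ (fun _ => -1) fun _ => v
  have hodd : ∀ η, (iteratedFDeriv ℝ 3 f η fun _ => -v) = -iteratedFDeriv ℝ 3 f η fun _ => v :=
    fun η => by
      simpa [Odd.neg_one_pow (n := 3) (by decide)] using
        (iteratedFDeriv ℝ 3 f η).map_smul_univ (fun _ => -1) fun _ => v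
  have hplus : ‖f (x + v) - (f x + fderiv ℝ f x v +
      (2 : ℝ)⁻¹ • iteratedFDeriv ℝ 2 f x fun _ => v)‖ ≤ M / 6 := by
    have := norm_sub_sum_iteratedFDeriv_le (n := 2) hf fun η hη =>
      hM η (hsegment (right_mem_segment ℝ _ _) hη)
    simpa [Finset.sum_range_succ, Nat.factorial] using this
  have hminus : ‖f (x - v) - (f x - fderiv ℝ f x v +
      (2 : ℝ)⁻¹ • iteratedFDeriv ℝ 2 f x fun _ => v)‖ ≤ M / 6 := by
    have := norm_sub_sum_iteratedFDeriv_le (n := 2) (x := x) (v := -v) (M := M) hf fun η hη => by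
      rw [hodd, norm_neg]
      exact hM η (hsegment (left_mem_segment ℝ _ _) (by rwa [sub_eq_add_neg]))
    simpa [Finset.sum_range_succ, Nat.factorial, heven, ← sub_eq_add_neg] using this
  calc ‖centralDifference f x v - (2 : ℝ) • fderiv ℝ f x v‖
      = ‖f (x + v) - (f x + fderiv ℝ f x v + (2 : ℝ)⁻¹ • iteratedFDeriv ℝ 2 f x fun _ => v) -
          (f (x - v) - (f x - fderiv ℝ f x v +
            (2 : ℝ)⁻¹ • iteratedFDeriv ℝ 2 f x fun _ => v))‖ := by
        congr 1
        rw [centralDifference]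
        module
    _ ≤ M / 6 + M / 6 := norm_sub_le_of_le hplus hminus
    _ = M / 3 := by ring

end Taylor

lemma norm_sum_smul_sq_le {ι F : Type*} [Fintype ι] [NormedAddCommGroup F] [NormedSpace ℝ F]
    (c : ι → ℝ) {r : ι → F} {C : ℝ} (hr : ∀ i, ‖r i‖ ≤ C) :
    ‖∑ i, c i • r i‖ ^ 2 ≤ Fintype.card ι * C ^ 2 * (c ⬝ᵥ c) := by
  have hsum : ‖∑ i, c i • r i‖ ≤ (∑ i, |c i|) * C := by
    rw [Finset.sum_mul]
    refine norm_sum_le_of_le _ fun i _ => ?_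
    rw [norm_smul, Real.norm_eq_abs]
    exact mul_le_mul_of_nonneg_left (hr i) (abs_nonneg _)
  calc ‖∑ i, c i • r i‖ ^ 2 ≤ (∑ i, |c i|) ^ 2 * C ^ 2 := by
        rw [← mul_pow]
        gcongr
    _ ≤ (Fintype.card ι * ∑ i, |c i| ^ 2) * C ^ 2 := by
        gcongr
        exact sq_sum_le_card_mul_sum_sq
    _ = Fintype.card ι * C ^ 2 * (c ⬝ᵥ c) := by
        simp only [sq_abs, dotProduct, ← sq]
        ring

lemma norm_sum_smul_centralDifference_sq_le {ι E F : Type*} [Fintype ι] [NormedAddCommGroup E]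
    [NormedSpace ℝ E] [NormedAddCommGroup F] [NormedSpace ℝ F] [CompleteSpace F] {f : E → F}
    {x : E} {e : ι → E} {ε M : ℝ} {c : ι → ℝ} (hf : ContDiff ℝ 3 f)
    (hM : ∀ i, ∀ η ∈ segment ℝ (x - ε • e i) (x + ε • e i),
      ‖iteratedFDeriv ℝ 3 f η fun _ => e i‖ ≤ M)
    (hc : fderiv ℝ f x (∑ i, c i • e i) = 0) :
    ‖∑ i, c i • centralDifference f x (ε • e i)‖ ^ 2 ≤
      Fintype.card ι * (ε ^ 3 * M / 3) ^ 2 * (c ⬝ᵥ c) := by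
  have hremainder : ∀ i,
      ‖centralDifference f x (ε • e i) - (2 : ℝ) • fderiv ℝ f x (ε • e i)‖ ≤
        |ε| ^ 3 * M / 3 := fun i => by
    refine norm_centralDifference_sub_two_smul_fderiv_le hf fun η hη => ?_
    rw [(iteratedFDeriv ℝ 3 f η).map_smul_univ (fun _ => ε) fun _ => e i, Fin.prod_const,
      norm_smul, norm_pow, Real.norm_eq_abs]
    exact mul_le_mul_of_nonneg_left (hM i η hη) (by positivity)
  have hcancel : ∑ i, c i • centralDifference f x (ε • e i) = ∑ i, c i •
      (centralDifference f x (ε • e i) - (2 : ℝ) • fderiv ℝ f x (ε • e i)) := by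
    have hzero : ∑ i, c i • (2 : ℝ) • fderiv ℝ f x (ε • e i) =
        (2 * ε) • fderiv ℝ f x (∑ i, c i • e i) := by
      simp only [map_sum, map_smul, Finset.smul_sum, smul_smul]
      exact Finset.sum_congr rfl fun i _ => by ring_nf
    simp only [smul_sub, Finset.sum_sub_distrib, hzero, hc, smul_zero, sub_zero]
  have hsq : (|ε| ^ 3 * M / 3) ^ 2 = (ε ^ 3 * M / 3) ^ 2 := by
    rw [← abs_pow, div_pow, mul_pow, sq_abs, ← mul_pow, ← div_pow]
  rw [hcancel, ← hsq]
  exact norm_sum_smul_sq_le c hremainder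

lemma iInf_eigenvalues_mul_dotProduct_le {ι : Type*} [Fintype ι] [DecidableEq ι]
    {A : Matrix ι ι ℝ} (hA : A.IsHermitian) (v : ι → ℝ) :
    (⨅ i, hA.eigenvalues i) * (v ⬝ᵥ v) ≤ v ⬝ᵥ A *ᵥ v := by
  have hpsd : (A - algebraMap ℝ (Matrix ι ι ℝ) (⨅ i, hA.eigenvalues i)).PosSemidef := by
    open scoped MatrixOrder in
    rw [← Matrix.le_iff, algebraMap_le_iff_le_spectrum hA.isSelfAdjoint,
      hA.spectrum_real_eq_range_eigenvalues]
    rintro _ ⟨i, rfl⟩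
    exact ciInf_le (finite_range _).bddBelow i
  simpa [sub_mulVec, Algebra.algebraMap_eq_smul_one, smul_mulVec] using
    hpsd.dotProduct_mulVec_nonneg v

lemma dotProduct_integral_inner_mulVec {ι F : Type*} [Fintype ι] [NormedAddCommGroup F]
    [InnerProductSpace ℝ F] {d : ι → ℝ → F} {a b : ℝ} (hd : ∀ i, ContinuousOn (d i) (uIcc a b))
    (v : ι → ℝ) :
    v ⬝ᵥ (Matrix.of fun i j => ∫ t in a..b, ⟪d i t, d j t⟫) *ᵥ v =
      ∫ t in a..b, ‖∑ i, v i • d i t‖ ^ 2 := by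
  have hentry : ∀ i j,
      IntervalIntegrable (fun t => ⟪d i t, d j t⟫ * v j) MeasureTheory.volume a b :=
    fun i j => (((hd i).inner (hd j)).mul continuousOn_const).intervalIntegrable
  have hrow : ∀ i, IntervalIntegrable (fun t => v i * ∑ j, ⟪d i t, d j t⟫ * v j)
      MeasureTheory.volume a b := fun i => by
    simpa using (IntervalIntegrable.sum _ fun j _ => hentry i j).const_mul (v i)
  have hexpand : ∀ t, ‖∑ i, v i • d i t‖ ^ 2 = ∑ i, v i * ∑ j, ⟪d i t, d j t⟫ * v j := by
    intro t
    rw [← real_inner_self_eq_norm_sq, ← star_dotProduct_gram_mulVec]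
    rfl
  simp only [hexpand, intervalIntegral.integral_finsetSum fun i _ => hrow i,
    intervalIntegral.integral_const_mul, intervalIntegral.integral_finsetSum fun j _ => hentry _ j,
    intervalIntegral.integral_mul_const]
  rfl

/-- Weak observability at `x₀`: the states near `x₀` are told apart from `x₀` by their outputs at
the times in `T`. The output map `y t x` is a function of time and initial state, so that neither
the flow nor the measurement map has to be named. -/
def WeaklyObservableOn {τ X Y : Type*} [TopologicalSpace X] (y : τ → X → Y) (T : Set τ) (x₀ : X) :
    Prop :=
  ∀ᶠ x in 𝓝 x₀, (∀ t ∈ T, y t x = y t x₀) → x = x₀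

lemma exists_finset_ker_pi_eq_bot {ι R V W : Type*} [Ring R] [AddCommGroup V] [Module R V]
    [IsArtinian R V] [AddCommGroup W] [Module R W] {L : ι → V →ₗ[R] W}
    (hL : ⨅ i, (L i).ker = ⊥) : ∃ s : Finset ι, (LinearMap.pi fun i : s => L i).ker = ⊥ := by
  obtain ⟨s, hs⟩ := Finset.exists_inf_eq_iInf fun i => (L i).ker
  exact ⟨s, by rw [LinearMap.ker_pi, iInf_subtype, ← hL, ← hs, Finset.inf_eq_iInf]⟩

lemma weaklyObservableOn_of_hasFDerivAt {τ E F : Type*} [NormedAddCommGroup E] [NormedSpace ℝ E]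
    [FiniteDimensional ℝ E] [NormedAddCommGroup F] [NormedSpace ℝ F] {y : τ → E → F}
    {y' : τ → E →L[ℝ] F} {T : Set τ} {x₀ : E} (hy : ∀ t ∈ T, HasFDerivAt (y t) (y' t) x₀)
    (hker : ∀ v, (∀ t ∈ T, y' t v = 0) → v = 0) : WeaklyObservableOn y T x₀ := by
  obtain ⟨s, hs⟩ := exists_finset_ker_pi_eq_bot (L := fun t : T => (y' t : E →ₗ[ℝ] F)) <|
    (Submodule.eq_bot_iff _).2 fun v hv =>
      hker v fun t ht => (Submodule.mem_iInf _).1 hv ⟨t, ht⟩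
  have hpi : HasFDerivAt (fun x (t : s) => y t x) (ContinuousLinearMap.pi fun t : s => y' t) x₀ :=
    hasFDerivAt_pi.2 fun t => hy t t.1.2
  obtain ⟨K, -, hK⟩ := (ContinuousLinearMap.pi fun t : s => y' t).exists_antilipschitzWith hs
  filter_upwards [eventually_nhdsWithin_iff.1 (hpi.eventually_ne ⟨K, hK⟩)] with x hx heq
  by_contra hne
  exact hx hne (funext fun t => heq t t.1.2)

section Gramian

variable {ι E F : Type*} [NormedAddCommGroup E] [NormedSpace ℝ E] [NormedAddCommGroup F]
  [InnerProductSpace ℝ F]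

/-- The empirical observability Gramian of the outputs `y` at `x₀` over `[0, t₁]`, for
perturbations of size `ε` along the directions `e`, which need not be an orthonormal basis. -/
noncomputable def empiricalObservabilityGramian (y : ℝ → E → F) (x₀ : E) (e : ι → E) (t₁ ε : ℝ) :
    Matrix ι ι ℝ :=
  Matrix.of fun i j => 1 / (4 * ε ^ 2) * ∫ t in (0 : ℝ)..t₁,
    ⟪centralDifference (y t) x₀ (ε • e i), centralDifference (y t) x₀ (ε • e j)⟫

lemma isHermitian_empiricalObservabilityGramian (y : ℝ → E → F) (x₀ : E) (e : ι → E) (t₁ ε : ℝ) :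
    (empiricalObservabilityGramian y x₀ e t₁ ε).IsHermitian := by
  ext i j
  simp [empiricalObservabilityGramian, real_inner_comm]

variable [Fintype ι] {y : ℝ → E → F} {x₀ : E} {e : ι → E} {t₁ ε : ℝ}

lemma dotProduct_empiricalObservabilityGramian_mulVec_lt (ht₁ : 0 < t₁) (hε : ε ≠ 0)
    (hy : ∀ x, ContinuousOn (fun t => y t x) (Icc 0 t₁)) {c : ι → ℝ} {B : ℝ}
    (hB : ∀ t ∈ Icc 0 t₁,
      t₁ * ‖∑ i, c i • centralDifference (y t) x₀ (ε • e i)‖ ^ 2 < 4 * ε ^ 2 * B) :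
    c ⬝ᵥ empiricalObservabilityGramian y x₀ e t₁ ε *ᵥ c < B := by
  have hcurve : ∀ i,
      ContinuousOn (fun t => centralDifference (y t) x₀ (ε • e i)) (Icc 0 t₁) :=
    fun i => (hy _).sub (hy _)
  have hquad : c ⬝ᵥ empiricalObservabilityGramian y x₀ e t₁ ε *ᵥ c =
      (4 * ε ^ 2)⁻¹ *
        ∫ t in (0 : ℝ)..t₁, ‖∑ i, c i • centralDifference (y t) x₀ (ε • e i)‖ ^ 2 := by
    rw [← dotProduct_integral_inner_mulVec (by rwa [uIcc_of_le ht₁.le]), ← smul_eq_mul,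
      ← dotProduct_smul, ← smul_mulVec, ← one_div]
    rfl
  rw [hquad, inv_mul_lt_iff₀ (by positivity)]
  calc _ < ∫ _ in (0 : ℝ)..t₁, 4 * ε ^ 2 * B / t₁ := by
        have hlt : ∀ t ∈ Icc 0 t₁, ‖∑ i, c i • centralDifference (y t) x₀ (ε • e i)‖ ^ 2 <
            4 * ε ^ 2 * B / t₁ := fun t ht => (lt_div_iff₀' ht₁).2 (hB t ht)
        exact intervalIntegral.integral_lt_integral_of_continuousOn_of_le_of_exists_lt ht₁
          (by fun_prop) continuousOn_const (fun t ht => (hlt t (Ioc_subset_Icc_self ht)).le)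
          ⟨0, left_mem_Icc.2 ht₁.le, hlt 0 (left_mem_Icc.2 ht₁.le)⟩
    _ = 4 * ε ^ 2 * B := by
        rw [intervalIntegral.integral_const, sub_zero, smul_eq_mul, mul_div_cancel₀ _ ht₁.ne']

variable [DecidableEq ι] [CompleteSpace F]

theorem weak_observability_of_gramian_min_singular_value_bound_general
    (he : Submodule.span ℝ (range e) = ⊤) (ht₁ : 0 < t₁) (hε : ε ≠ 0)
    (hsmooth : ∀ t ∈ Icc 0 t₁, ContDiff ℝ 3 (y t))
    (hcont : ∀ x, ContinuousOn (fun t => y t x) (Icc 0 t₁)) {Γ : ℝ → ℝ}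
    (hΓ : ∀ t ∈ Icc 0 t₁, ∀ i, ∀ η ∈ segment ℝ (x₀ - ε • e i) (x₀ + ε • e i),
      ‖iteratedFDeriv ℝ 3 (y t) η fun _ => e i‖ ≤ Γ t)
    (hgap : ∀ t ∈ Icc 0 t₁, Fintype.card ι * ε ^ 4 * t₁ / 36 * Γ t ^ 2 <
      ⨅ i, (isHermitian_empiricalObservabilityGramian y x₀ e t₁ ε).eigenvalues i) :
    WeaklyObservableOn y (Icc 0 t₁) x₀ := by
  have : FiniteDimensional ℝ E := ⟨he ▸ Submodule.fg_span (finite_range e)⟩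
  refine weaklyObservableOn_of_hasFDerivAt (y' := fun t => fderiv ℝ (y t) x₀)
    (fun t ht => ((hsmooth t ht).differentiable (by norm_num) x₀).hasFDerivAt) fun v hv => ?_
  obtain ⟨c, rfl⟩ := (Submodule.mem_span_range_iff_exists_fun ℝ).1 (he ▸ Submodule.mem_top : v ∈ _)
  by_contra hne
  have hc : 0 < c ⬝ᵥ c := dotProduct_self_star_pos_iff.2 fun h => hne (by simp [h])
  refine (iInf_eigenvalues_mul_dotProduct_le
    (isHermitian_empiricalObservabilityGramian y x₀ e t₁ ε) c).not_gt <|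
    dotProduct_empiricalObservabilityGramian_mulVec_lt ht₁ hε hcont fun t ht => ?_
  calc t₁ * ‖∑ i, c i • centralDifference (y t) x₀ (ε • e i)‖ ^ 2
      ≤ t₁ * (Fintype.card ι * (ε ^ 3 * Γ t / 3) ^ 2 * (c ⬝ᵥ c)) := by
        gcongr
        exact norm_sum_smul_centralDifference_sq_le (hsmooth t ht) (hΓ t ht) (hv t ht)
    _ = 4 * ε ^ 2 * (Fintype.card ι * ε ^ 4 * t₁ / 36 * Γ t ^ 2 * (c ⬝ᵥ c)) := by ring
    _ < _ := by
        gcongr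
        exact hgap t ht

end Gramian

section ThirdDerivativeBound

variable {ι κ E P : Type*} [Fintype κ] [NormedAddCommGroup E] [NormedSpace ℝ E]
  [NormedAddCommGroup P] [NormedSpace ℝ P]

lemma norm_le_sum_abs (v : EuclideanSpace ℝ κ) : ‖v‖ ≤ ∑ k, |v k| := by
  rw [EuclideanSpace.norm_eq, Real.sqrt_le_iff]
  exact ⟨Finset.sum_nonneg fun k _ => abs_nonneg _,
    Finset.sum_sq_le_sq_sum_of_nonneg fun k _ => abs_nonneg _⟩

/-- The quantity `Γ` controlling the Taylor remainder of `f` along the segments of half-length `ε`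
in the directions `e`: the largest `1`-norm of a third derivative `D³f(η)(eᵢ, eᵢ, eᵢ)`. Being an
`iSup` of reals, it is `0` when these are unbounded. -/
noncomputable def thirdDerivativeBound (f : E → EuclideanSpace ℝ κ) (x : E) (e : ι → E)
    (ε : ℝ) : ℝ :=
  ⨆ i, ⨆ η : segment ℝ (x - ε • e i) (x + ε • e i),
    ∑ k, |iteratedFDeriv ℝ 3 f (η : E) (fun _ : Fin 3 => e i) k|

lemma thirdDerivativeBound_nonneg (f : E → EuclideanSpace ℝ κ) (x : E) (e : ι → E) (ε : ℝ) :
    0 ≤ thirdDerivativeBound f x e ε :=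
  Real.iSup_nonneg fun _ => Real.iSup_nonneg fun _ => Finset.sum_nonneg fun _ _ => abs_nonneg _

variable [Finite ι] {y : P → E → EuclideanSpace ℝ κ} {S : Set P}

lemma exists_sum_abs_iteratedFDeriv_le (hS : IsCompact S)
    (hy : ContDiff ℝ 3 fun q : P × E => y q.1 q.2) (x : E) (e : ι → E) (ε : ℝ) :
    ∃ C, ∀ t ∈ S, ∀ i, ∀ η ∈ segment ℝ (x - ε • e i) (x + ε • e i),
      ∑ k, |iteratedFDeriv ℝ 3 (y t) η (fun _ : Fin 3 => e i) k| ≤ C := by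
  have hcont : ∀ i, Continuous fun q : P × E =>
      ∑ k, |iteratedFDeriv ℝ 3 (y q.1) q.2 (fun _ : Fin 3 => e i) k| := fun i => by
    have := continuous_iteratedFDeriv_slice (𝕜 := ℝ) (k := 3) hy
    fun_prop
  have hcompact : ∀ i, IsCompact (S ×ˢ segment ℝ (x - ε • e i) (x + ε • e i)) := fun i => by
    rw [← convexHull_pair]
    exact hS.prod ((toFinite _).isCompact_convexHull ℝ)
  choose C hC using fun i => (hcompact i).bddAbove_image (hcont i).continuousOn
  obtain ⟨B, hB⟩ := (finite_range C).bddAbove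
  exact ⟨B, fun t ht i η hη =>
    (hC i ⟨(t, η), ⟨ht, hη⟩, rfl⟩).trans (hB ⟨i, rfl⟩)⟩

lemma bddAbove_range_thirdDerivativeBound (hS : IsCompact S)
    (hy : ContDiff ℝ 3 fun q : P × E => y q.1 q.2) (x : E) (e : ι → E) (ε : ℝ) :
    BddAbove (range fun t : S => thirdDerivativeBound (y t) x e ε) := by
  obtain ⟨C, hC⟩ := exists_sum_abs_iteratedFDeriv_le hS hy x e ε
  refine ⟨max C 0, forall_mem_range.2 fun t => ?_⟩
  exact Real.iSup_le (fun i => Real.iSup_le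
    (fun η => (hC t t.2 i η η.2).trans (le_max_left _ _)) (le_max_right _ _)) (le_max_right _ _)

lemma norm_iteratedFDeriv_le_thirdDerivativeBound {f : E → EuclideanSpace ℝ κ}
    (hf : ContDiff ℝ 3 f) {x : E} {e : ι → E} {ε : ℝ} (i : ι) {η : E}
    (hη : η ∈ segment ℝ (x - ε • e i) (x + ε • e i)) :
    ‖iteratedFDeriv ℝ 3 f η fun _ => e i‖ ≤ thirdDerivativeBound f x e ε := by
  obtain ⟨C, hC⟩ := exists_sum_abs_iteratedFDeriv_le (y := fun _ : ℝ => f) isCompact_singleton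
    (hf.comp contDiff_snd) x e ε
  have hbdd : BddAbove (range fun η : segment ℝ (x - ε • e i) (x + ε • e i) =>
      ∑ k, |iteratedFDeriv ℝ 3 f (η : E) (fun _ : Fin 3 => e i) k|) :=
    ⟨C, forall_mem_range.2 fun η => hC 0 rfl i η η.2⟩
  exact (norm_le_sum_abs _).trans <|
    le_ciSup_of_le (finite_range _).bddAbove i <| le_ciSup hbdd ⟨η, hη⟩

end ThirdDerivativeBound

lemma bddAbove_range_norm_fderiv {E F P : Type*} [NormedAddCommGroup E] [NormedSpace ℝ E]
    [NormedAddCommGroup F] [NormedSpace ℝ F] [NormedAddCommGroup P] [NormedSpace ℝ P]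
    {y : P → E → F} {S : Set P} (hS : IsCompact S)
    (hy : ContDiff ℝ 1 fun q : P × E => y q.1 q.2) (x : E) :
    BddAbove (range fun t : S => ‖fderiv ℝ (y t) x‖) := by
  have hcont : Continuous fun t => ‖fderiv ℝ (y t) x‖ :=
    (ContDiff.fderiv (n := 0) hy contDiff_const (zero_add 1).le).continuous.norm
  simpa [image_eq_range] using hS.bddAbove_image hcont.continuousOn

lemma mul_sq_le_ciSup_add {α : Type*} {N Γ : α → ℝ} (hN : BddAbove (range N))
    (hΓ : BddAbove (range Γ)) (hN₀ : ∀ a, 0 ≤ N a) (hΓ₀ : ∀ a, 0 ≤ Γ a) {A B : ℝ} (hA : 0 ≤ A)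
    (hB : 0 ≤ B) (a : α) : B * Γ a ^ 2 ≤ ⨆ a, (A * N a * Γ a + B * Γ a ^ 2) := by
  obtain ⟨n, hn⟩ := hN
  obtain ⟨g, hg⟩ := hΓ
  have hbdd : BddAbove (range fun a => A * N a * Γ a + B * Γ a ^ 2) := by
    refine ⟨A * n * g + B * g ^ 2, forall_mem_range.2 fun a => ?_⟩
    have hna := hn ⟨a, rfl⟩
    have hga := hg ⟨a, rfl⟩
    have := hΓ₀ a
    have := (hN₀ a).trans hna
    gcongr
  refine le_trans ?_ (le_ciSup hbdd a)
  exact le_add_of_nonneg_left (mul_nonneg (mul_nonneg hA (hN₀ a)) (hΓ₀ a))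

/-- (Theorem `empweakobsv`.)  If the smallest singular value (= smallest
eigenvalue, the Gramian being symmetric positive semidefinite) of the finite-`ε` empirical
observability Gramian exceeds
`sup_{t∈[0,t₁]} ((√n ε² t₁/3)‖D_x y(t,x₀)‖₂ Γ(t) + (n ε⁴ t₁/36) Γ(t)²)`,
where `Γ(t) = max_i sup_{η∈[x₀−εeᵢ, x₀+εeᵢ]} ‖D³_x y(t,η)(eᵢ,eᵢ,eᵢ)‖₁`, then the system is
weakly observable at `x₀`. -/
theorem weak_observability_of_gramian_min_singular_value_bound
    {n p : ℕ} (hn : 0 < n) (hp : 0 < p)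
    (φ : ℝ → EuclideanSpace ℝ (Fin n) → EuclideanSpace ℝ (Fin n))
    (h : EuclideanSpace ℝ (Fin n) → EuclideanSpace ℝ (Fin p))
    (y : ℝ → EuclideanSpace ℝ (Fin n) → EuclideanSpace ℝ (Fin p))
    (hy : y = fun t x => h (φ t x))
    (hsmooth : ContDiff ℝ (⊤ : ℕ∞) fun q : ℝ × EuclideanSpace ℝ (Fin n) => y q.1 q.2)
    (x₀ : EuclideanSpace ℝ (Fin n)) (t₁ ε : ℝ) (ht₁ : 0 < t₁) (hε : 0 < ε)
    (W : Matrix (Fin n) (Fin n) ℝ)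
    (hW : W = Matrix.of fun i j =>
      (1 / (4 * ε ^ 2)) *
        ∫ t in (0:ℝ)..t₁,
          ⟪y t (x₀ + ε • EuclideanSpace.single i (1:ℝ)) -
              y t (x₀ - ε • EuclideanSpace.single i (1:ℝ)),
            y t (x₀ + ε • EuclideanSpace.single j (1:ℝ)) -
              y t (x₀ - ε • EuclideanSpace.single j (1:ℝ))⟫)
    (Γ : ℝ → ℝ)
    (hΓ : Γ = fun t => ⨆ i : Fin n,
      ⨆ η : segment ℝ (x₀ - ε • EuclideanSpace.single i (1:ℝ))
          (x₀ + ε • EuclideanSpace.single i (1:ℝ)),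
        ∑ k, |iteratedFDeriv ℝ 3 (fun x => y t x) (η : EuclideanSpace ℝ (Fin n))
          (fun _ : Fin 3 => EuclideanSpace.single i (1:ℝ)) k|)
    (hherm : W.IsHermitian)
    (hgap : (⨆ t : Set.Icc (0:ℝ) t₁,
        ((Real.sqrt n * ε ^ 2 * t₁ / 3) * ‖fderiv ℝ (fun x => y (t : ℝ) x) x₀‖ * Γ t +
          ((n : ℝ) * ε ^ 4 * t₁ / 36) * Γ t ^ 2)) < ⨅ i, hherm.eigenvalues i) :
    ∃ U : Set (EuclideanSpace ℝ (Fin n)), IsOpen U ∧ x₀ ∈ U ∧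
      ∀ x₁ ∈ U, (∀ t : ℝ, 0 ≤ t → y t x₁ = y t x₀) → x₁ = x₀ := by
  subst hW hΓ
  let e : Fin n → EuclideanSpace ℝ (Fin n) := fun i => EuclideanSpace.single i 1
  have he : Submodule.span ℝ (range e) = ⊤ := by
    simpa [e, ← EuclideanSpace.basisFun_apply] using
      (EuclideanSpace.basisFun (Fin n) ℝ).toBasis.span_eq
  have hjoint : ContDiff ℝ 3 fun q : ℝ × EuclideanSpace ℝ (Fin n) => y q.1 q.2 :=
    contDiff_infty.1 hsmooth 3
  have hslice : ∀ t, ContDiff ℝ 3 (y t) := fun t => hjoint.comp (contDiff_prodMk_right t)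
  have hcurve : ∀ x, Continuous fun t => y t x := fun x => hjoint.continuous.comp (.prodMk_left x)
  have hgap_at : ∀ t ∈ Icc 0 t₁, Fintype.card (Fin n) * ε ^ 4 * t₁ / 36 *
      thirdDerivativeBound (y t) x₀ e ε ^ 2 < ⨅ i, hherm.eigenvalues i := fun t ht => by
    rw [Fintype.card_fin]
    exact (mul_sq_le_ciSup_add (A := √n * ε ^ 2 * t₁ / 3)
      (bddAbove_range_norm_fderiv isCompact_Icc (hjoint.of_le (by norm_num)) x₀)
      (bddAbove_range_thirdDerivativeBound isCompact_Icc hjoint x₀ e ε) (fun _ => norm_nonneg _)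
      (fun _ => thirdDerivativeBound_nonneg _ _ _ _) (by positivity) (by positivity)
      ⟨t, ht⟩).trans_lt hgap
  obtain ⟨U, hU, hUopen, hx₀⟩ := eventually_nhds_iff.1 <|
    weak_observability_of_gramian_min_singular_value_bound_general he ht₁ hε.ne'
      (fun t _ => hslice t) (fun x => (hcurve x).continuousOn)
      (fun t _ i _ hη => norm_iteratedFDeriv_le_thirdDerivativeBound (hslice t) i hη) hgap_at
  exact ⟨U, hUopen, hx₀, fun x hx heq => hU x hx fun t ht => heq t ht.1⟩
end
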